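/- (Generalised Graham–Pollak bound) For every generalised multi-clause-set F one has δ(F) ≤ hdef(F), i.e., the deficiency of F is at most its hermitian defect. -/

import Mathlib

open scoped Classical

namespace GCLS

variable {V α : Type} [DecidableEq V] [DecidableEq α]

/-- A finite "functional" set of (variable, value) pairs, with values inside the
given domains `D`; used both for clauses and for partial assignments. -/
def FinFn (D : V → Finset α) : Type :=
  { s : Finset (V × α) // (∀ p ∈ s, p.2 ∈ D p.1) ∧
      ∀ p ∈ s, ∀ q ∈ s, p.1 = q.1 → p = q }

variable {D : V → Finset α}

instance : DecidableEq (FinFn D) :=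
  fun a b => decidable_of_iff (a.1 = b.1) Subtype.ext_iff.symm

namespace FinFn

/-- The set of variables occurring. -/
def vars (s : FinFn D) : Finset V := s.1.image Prod.fst

/-- Restriction to the pairs whose variable lies in `W`. -/
def restrictVars (s : FinFn D) (W : Finset V) : FinFn D :=
  ⟨s.1.filter (fun p => p.1 ∈ W),
   fun p hp => s.2.1 p (Finset.mem_filter.mp hp).1,
   fun p hp q hq h =>
     s.2.2 p (Finset.mem_filter.mp hp).1 q (Finset.mem_filter.mp hq).1 h⟩

/-- Removal of a set of pairs. -/
def sdiff (s : FinFn D) (t : Finset (V × α)) : FinFn D :=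
  ⟨s.1 \ t,
   fun p hp => s.2.1 p (Finset.mem_sdiff.mp hp).1,
   fun p hp q hq h =>
     s.2.2 p (Finset.mem_sdiff.mp hp).1 q (Finset.mem_sdiff.mp hq).1 h⟩

end FinFn

/-- Clauses: finite sets of literals `(v,ε)` (meaning "v ≠ ε"), at most one literal
per variable, values inside the domains. -/
abbrev Clause (D : V → Finset α) := FinFn D

/-- Partial assignments: finitely many variables get values inside their domains. -/
abbrev PAssign (D : V → Finset α) := FinFn D

/-- `φ` satisfies the literal `(v,ε)` (i.e. "v ≠ ε"): `v` is assigned a value ≠ `ε`. -/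
def SatLit (φ : PAssign D) (l : V × α) : Prop :=
  ∃ ε, (l.1, ε) ∈ φ.1 ∧ ε ≠ l.2

/-- `φ` satisfies a clause iff it satisfies some literal of it. -/
def SatClause (φ : PAssign D) (C : Clause D) : Prop :=
  ∃ l ∈ C.1, SatLit φ l

/-- The clause obtained from `C` by deleting all literals falsified by `φ`. -/
def Clause.restrict (φ : PAssign D) (C : Clause D) : Clause D :=
  FinFn.sdiff C φ.1

/-- The operation `φ * F` on multi-clause-sets: remove all clauses satisfied by `φ`
and delete all falsified literals from the remaining clauses. -/
noncomputable def applyM (φ : PAssign D) (F : Multiset (Clause D)) : Multiset (Clause D) :=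
  (F.filter (fun C => ¬ SatClause φ C)).map (Clause.restrict φ)

/-- The operation `φ * F` on clause-sets (with contraction of equal clauses). -/
noncomputable def applyF (φ : PAssign D) (F : Finset (Clause D)) : Finset (Clause D) :=
  (F.filter (fun C => ¬ SatClause φ C)).image (Clause.restrict φ)

/-- Satisfiability: some partial assignment satisfies all clauses. -/
def Sat (F : Multiset (Clause D)) : Prop :=
  ∃ φ : PAssign D, applyM φ F = 0

/-- Minimal unsatisfiability of a clause-set. -/
def MinUnsat (F : Finset (Clause D)) : Prop :=
  ¬ Sat F.val ∧ ∀ F' ⊂ F, Sat F'.val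

/-- The variables of a multi-clause-set. -/
def mvars (F : Multiset (Clause D)) : Finset V := F.toFinset.sup FinFn.vars

/-- The deficiency `δ(F) = c(F) - Σ_{v ∈ var(F)} (|D_v| - 1)`. -/
def delta (F : Multiset (Clause D)) : ℤ :=
  (Multiset.card F : ℤ) - ∑ v ∈ mvars F, ((D v).card - 1 : ℤ)

lemma powerset_toFinset_nonempty (F : Multiset (Clause D)) :
    F.powerset.toFinset.Nonempty :=
  ⟨0, by simp⟩

/-- The maximal deficiency `δ*(F) = max {δ(F') : F' ≤ F}`. -/
noncomputable def deltaStar (F : Multiset (Clause D)) : ℤ :=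
  F.powerset.toFinset.sup' (powerset_toFinset_nonempty F) delta

/-- A tight sub-multi-clause-set: `F' ≤ F` with `δ(F') = δ*(F)`. -/
noncomputable def Tight (F F' : Multiset (Clause D)) : Prop :=
  F' ≤ F ∧ delta F' = deltaStar F

/-- `F` is matching satisfiable: the clause-variable graph `B(F)` has a matching
covering all clause-nodes.  Such a matching is encoded as a multiset `P` of pairs
(clause-occurrence, variable-node), where the variable-nodes `(v,k)`,
`k < |D v| - 1`, are the copies of the variable `v`; the matching covers each
clause-occurrence exactly once (`P.map Prod.fst = F`), uses pairwise distinct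
variable-nodes, and respects adjacency in `B(F)`. -/
def MatchingSat (F : Multiset (Clause D)) : Prop :=
  ∃ P : Multiset (Clause D × (V × ℕ)),
    P.map Prod.fst = F ∧ (P.map Prod.snd).Nodup ∧
    ∀ p ∈ P, p.2.1 ∈ FinFn.vars p.1 ∧ p.2.2 < (D p.2.1).card - 1

/-- The edge between clause `C` and the copies of variable `v` is retained in
`B_φ(F)`: the literal of `C` with variable `v` is satisfied by `φ`. -/
def EdgeSat (φ : PAssign D) (C : Clause D) (v : V) : Prop :=
  ∃ ε, (v, ε) ∈ C.1 ∧ SatLit φ (v, ε)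

/-- `φ` is matching-satisfying for `F`: `B_φ(F)` has a matching covering all
clause-nodes. -/
def MatchingSatisfying (φ : PAssign D) (F : Multiset (Clause D)) : Prop :=
  ∃ P : Multiset (Clause D × (V × ℕ)),
    P.map Prod.fst = F ∧ (P.map Prod.snd).Nodup ∧
    ∀ p ∈ P, p.2.2 < (D p.2.1).card - 1 ∧ EdgeSat φ p.1 p.2.1

/-- The maximum size of a matching in `B(F)`. -/
noncomputable def nu (F : Multiset (Clause D)) : ℕ :=
  sSup { k | ∃ P : Multiset (Clause D × (V × ℕ)),
    P.map Prod.fst ≤ F ∧ (P.map Prod.snd).Nodup ∧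
    (∀ p ∈ P, p.2.1 ∈ FinFn.vars p.1 ∧ p.2.2 < (D p.2.1).card - 1) ∧
    Multiset.card P = k }

/-- The maximum size of a matching in `B_φ(F)`. -/
noncomputable def nuSub (φ : PAssign D) (F : Multiset (Clause D)) : ℕ :=
  sSup { k | ∃ P : Multiset (Clause D × (V × ℕ)),
    P.map Prod.fst ≤ F ∧ (P.map Prod.snd).Nodup ∧
    (∀ p ∈ P, p.2.2 < (D p.2.1).card - 1 ∧ EdgeSat φ p.1 p.2.1) ∧
    Multiset.card P = k }

/-- `φ` is matching-maximum for `F`. -/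
noncomputable def MatchingMaximum (φ : PAssign D) (F : Multiset (Clause D)) : Prop :=
  nuSub φ F = nu F

/-- `φ` is an autarky for `F`: every clause touched by `φ` is satisfied by `φ`. -/
def IsAutarky (φ : PAssign D) (F : Multiset (Clause D)) : Prop :=
  ∀ C ∈ F, (FinFn.vars C ∩ FinFn.vars φ).Nonempty → SatClause φ C

/-- `F` is lean: it has no non-trivial autarky. -/
def IsLean (F : Multiset (Clause D)) : Prop :=
  ¬ ∃ φ : PAssign D, IsAutarky φ F ∧ (FinFn.vars φ ∩ mvars F).Nonempty

/-- The sub-multi-clause-set of clauses touched by the variables in `W`. -/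
noncomputable def touchedBy (F : Multiset (Clause D)) (W : Finset V) : Multiset (Clause D) :=
  F.filter (fun C => (FinFn.vars C ∩ W).Nonempty)

/-- The restriction `F[W]`: keep the clauses touching `W` and delete from them all
literals whose variable is not in `W`. -/
noncomputable def restrictTo (F : Multiset (Clause D)) (W : Finset V) : Multiset (Clause D) :=
  (touchedBy F W).map (fun C => FinFn.restrictVars C W)

/-- `φ` is a matching autarky for `F`: `φ` is matching-satisfying for the
sub-multi-clause-set of clauses touched by `φ`. -/
noncomputable def IsMatchingAutarky (φ : PAssign D) (F : Multiset (Clause D)) : Prop :=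
  MatchingSatisfying φ (touchedBy F (FinFn.vars φ))

/-- `F` is matching lean: no non-trivial matching autarky. -/
noncomputable def MatchingLean (F : Multiset (Clause D)) : Prop :=
  ¬ ∃ φ : PAssign D, IsMatchingAutarky φ F ∧ (FinFn.vars φ ∩ mvars F).Nonempty

lemma surp_nonempty {F : Multiset (Clause D)} (h : (mvars F).Nonempty) :
    ((mvars F).powerset.erase ∅).Nonempty := by
  obtain ⟨v, hv⟩ := h
  refine ⟨{v}, ?_⟩
  simp [Finset.mem_erase, Finset.singleton_subset_iff, hv]

/-- The surplus `surp(F) = min {δ(F[W]) : ∅ ≠ W ⊆ var(F)}` (and `0` if `var(F) = ∅`). -/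
noncomputable def surp (F : Multiset (Clause D)) : ℤ :=
  if h : (mvars F).Nonempty then
    ((mvars F).powerset.erase ∅).inf' (surp_nonempty h)
      (fun W => delta (restrictTo F W))
  else 0

/-- The number of occurrences of the literal `l` in `F`. -/
noncomputable def litCount (F : Multiset (Clause D)) (l : V × α) : ℕ :=
  Multiset.card (F.filter (fun C => l ∈ C.1))

/-- The number of occurrences `#_v(F)` of the variable `v` in `F`. -/
noncomputable def varCount (F : Multiset (Clause D)) (v : V) : ℕ :=
  ∑ ε ∈ D v, litCount F (v, ε)

/-- The partial assignment `⟨v → ε⟩`. -/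
def single (v : V) (ε : α) (hε : ε ∈ D v) : PAssign D :=
  ⟨{(v, ε)}, by
    refine ⟨?_, ?_⟩
    · intro p hp
      rw [Finset.mem_singleton] at hp
      subst hp; exact hε
    · intro p hp q hq _
      rw [Finset.mem_singleton] at hp hq
      subst hp; subst hq; rfl⟩

/-- Composition `φ ∘ ψ` of partial assignments: domain is the union of the domains,
`ψ` taking precedence. -/
def comp (φ ψ : PAssign D) : PAssign D :=
  ⟨ψ.1 ∪ φ.1.filter (fun p => p.1 ∉ FinFn.vars ψ), by
    constructor
    · intro p hp
      rcases Finset.mem_union.mp hp with h | h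
      · exact ψ.2.1 p h
      · exact φ.2.1 p (Finset.mem_filter.mp h).1
    · intro p hp q hq hpq
      rcases Finset.mem_union.mp hp with h1 | h1 <;>
        rcases Finset.mem_union.mp hq with h2 | h2
      · exact ψ.2.2 p h1 q h2 hpq
      · exact absurd (hpq ▸ Finset.mem_image_of_mem Prod.fst h1)
          (Finset.mem_filter.mp h2).2
      · exact absurd (hpq.symm ▸ Finset.mem_image_of_mem Prod.fst h2)
          (Finset.mem_filter.mp h1).2
      · exact φ.2.2 p (Finset.mem_filter.mp h1).1 q (Finset.mem_filter.mp h2).1 hpq⟩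

/-- Two clauses clash (in some variable). -/
def Clash (C C' : Clause D) : Prop :=
  ∃ v ε ε', (v, ε) ∈ C.1 ∧ (v, ε') ∈ C'.1 ∧ ε ≠ ε'

/-- The number of variables in which two clauses clash. -/
noncomputable def clashCount (C C' : Clause D) : ℕ :=
  ((FinFn.vars C).filter
    (fun v => ∃ ε ε', (v, ε) ∈ C.1 ∧ (v, ε') ∈ C'.1 ∧ ε ≠ ε')).card

/-- Hitting clause-sets: every two distinct clauses clash. -/
def Hitting (F : Finset (Clause D)) : Prop :=
  ∀ C ∈ F, ∀ C' ∈ F, C ≠ C' → Clash C C'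

/-- Boolean clauses over the boolean variables `V × α` (one boolean variable per
generalised literal; the value `false` gives the positive boolean literal). -/
abbrev BClause (V α : Type) :=
  Clause (fun _ : V × α => (Finset.univ : Finset Bool))

/-- The direct translation of a single clause: each literal `(v,ε)` is replaced by
the positive boolean literal of the boolean variable `(v,ε)`. -/
def dirClause (C : Clause D) : BClause V α :=
  ⟨C.1.image (fun p => (p, false)), by
    constructor
    · intro p _; exact Finset.mem_univ _
    · intro p hp q hq h
      simp only [Finset.mem_image] at hp hq
      obtain ⟨a, -, rfl⟩ := hp
      obtain ⟨b, -, rfl⟩ := hq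
      exact congrArg (fun x => (x, false)) h⟩

/-- The ALO-clause for a variable `v`: the negative boolean literals of the boolean
variables `(v,ε)` for `ε ∈ D v`. -/
def aloClause (D : V → Finset α) (v : V) : BClause V α :=
  ⟨(D v).image (fun ε => ((v, ε), true)), by
    constructor
    · intro p _; exact Finset.mem_univ _
    · intro p hp q hq h
      simp only [Finset.mem_image] at hp hq
      obtain ⟨a, -, rfl⟩ := hp
      obtain ⟨b, -, rfl⟩ := hq
      exact congrArg (fun x => (x, true)) h⟩

/-- The direct translation `Γ(F)`: the translated clauses together with the
ALO-clauses for all occurring variables. -/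
noncomputable def dirTrans (F : Finset (Clause D)) : Finset (BClause V α) :=
  F.image dirClause ∪ (mvars F.val).image (aloClause D)

/-!
The conflict matrix is the sum, over the variables `v` and the ordered pairs of distinct values
`ε ≠ ε'` of `v`, of the rank-one matrices `a bᵀ`, where `a` and `b` are the occurrence vectors of
the literals `(v, ε)` and `(v, ε')`. Fix one value of each variable. A vector orthogonal to the
occurrence vectors of all literals with the other `∑ (|D_v| - 1)` values is isotropic, because
each pair `ε ≠ ε'` contains at least one of these. The form is thus zero on a subspace of
codimension at most `∑ (|D_v| - 1)`, which meets every subspace on which it is definite trivially;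
so this number bounds both indices of inertia.
-/

section HermitianRank

open Module QuadraticMap
open scoped Matrix

variable {n : Type*} [Fintype n] [DecidableEq n] {A : Matrix n n ℝ}

/-- The hermitian rank of a real symmetric matrix: the larger of its numbers of positive and of
negative eigenvalues, counted with multiplicity. -/
noncomputable def hermitianRank (hA : A.IsHermitian) : ℕ :=
  max (Finset.univ.filter fun i => 0 < hA.eigenvalues i).card
    (Finset.univ.filter fun i => hA.eigenvalues i < 0).card

lemma toQuadraticForm'_apply {R : Type*} [CommRing R] (A : Matrix n n R) (x : n → R) :
    A.toQuadraticForm' x = x ⬝ᵥ A *ᵥ x :=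
  Matrix.toLinearMap₂'_apply' A x x

lemma toQuadraticForm'_equivalent_weightedSumSquares_eigenvalues (hA : A.IsHermitian) :
    Equivalent A.toQuadraticForm' (weightedSumSquares ℝ hA.eigenvalues) := by
  let U : Matrix n n ℝ := hA.eigenvectorUnitary
  have diagonalization : Uᵀ * A * U = Matrix.diagonal hA.eigenvalues := by
    simpa [U, Unitary.conjStarAlgAut_star_apply, Matrix.star_eq_conjTranspose, Function.comp_def]
      using hA.conjStarAlgAut_star_eigenvectorUnitary
  let e := Matrix.UnitaryGroup.toLinearEquiv hA.eigenvectorUnitary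
  have form_comp : A.toQuadraticForm'.comp e.toLinearMap =
      weightedSumSquares ℝ hA.eigenvalues := by
    ext x
    calc A.toQuadraticForm' (U *ᵥ x)
        = x ⬝ᵥ (Uᵀ * A * U) *ᵥ x := by
          rw [toQuadraticForm'_apply, ← Matrix.mulVec_mulVec, ← Matrix.mulVec_mulVec,
            Matrix.dotProduct_mulVec x, Matrix.vecMul_transpose]
      _ = weightedSumSquares ℝ hA.eigenvalues x := by
          rw [diagonalization, weightedSumSquares_apply]
          simp only [dotProduct, Matrix.mulVec_diagonal, smul_eq_mul]
          exact Finset.sum_congr rfl fun i _ => by ring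
  exact ⟨form_comp ▸ isometryEquivOfCompLinearEquiv _ e⟩

lemma hermitianRank_eq_max_sigPos_sigNeg (hA : A.IsHermitian) :
    hermitianRank hA = max (sigPos A.toQuadraticForm') (sigNeg A.toQuadraticForm') := by
  have diagonal_form := toQuadraticForm'_equivalent_weightedSumSquares_eigenvalues hA
  rw [QuadraticForm.sigPos_of_equiv_weightedSumSquares diagonal_form,
    QuadraticForm.sigNeg_of_equiv_weightedSumSquares diagonal_form,
    Set.ncard_eq_toFinset_card', Set.ncard_eq_toFinset_card', Set.toFinset_ofPred,
    Set.toFinset_ofPred, hermitianRank]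

lemma hermitianRank_add_finrank_le_of_isotropic (hA : A.IsHermitian) (W : Submodule ℝ (n → ℝ))
    (hW : ∀ x ∈ W, x ⬝ᵥ A *ᵥ x = 0) :
    hermitianRank hA + finrank ℝ W ≤ Fintype.card n := by
  have isotropic : ∀ x ∈ W, A.toQuadraticForm' x = 0 := fun x hx =>
    (toQuadraticForm'_apply A x).trans (hW x hx)
  have pos_bound := QuadraticForm.sigPos_add_finrank_le_of_nonpos
    (Q := A.toQuadraticForm') fun x hx => (isotropic x hx).le
  have neg_bound := QuadraticForm.sigPos_add_finrank_le_of_nonpos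
    (Q := -A.toQuadraticForm') (V := W) fun x hx => by simp [isotropic x hx]
  rw [finrank_fintype_fun_eq_card] at pos_bound neg_bound
  rw [sigPos_neg] at neg_bound
  rw [hermitianRank_eq_max_sigPos_sigNeg]
  omega

lemma hermitianRank_le_finrank_of_isotropic_ker {E : Type*} [AddCommGroup E] [Module ℝ E]
    [FiniteDimensional ℝ E] (hA : A.IsHermitian) (T : (n → ℝ) →ₗ[ℝ] E)
    (hT : ∀ x, T x = 0 → x ⬝ᵥ A *ᵥ x = 0) :
    hermitianRank hA ≤ finrank ℝ E := by
  have isotropic_bound := hermitianRank_add_finrank_le_of_isotropic hA T.ker hT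
  have rank_nullity := T.finrank_range_add_finrank_ker
  have range_bound := T.range.finrank_le
  rw [finrank_fintype_fun_eq_card] at rank_nullity
  omega

end HermitianRank

section ConflictMatrix

open scoped Matrix

omit [DecidableEq V] [DecidableEq α] in
lemma FinFn.snd_eq_of_mem {s : FinFn D} {v : V} {ε ε' : α} (h : (v, ε) ∈ s.1)
    (h' : (v, ε') ∈ s.1) : ε = ε' :=
  congrArg Prod.snd (s.2.2 _ h _ h' rfl)

omit [DecidableEq α] in
lemma clashCount_self (C : Clause D) : clashCount C C = 0 := by
  rw [clashCount, Finset.card_eq_zero, Finset.filter_eq_empty_iff]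
  rintro v - ⟨ε, ε', hε, hε', hne⟩
  exact hne (FinFn.snd_eq_of_mem hε hε')

lemma clashCount_eq_sum_card_offDiag {W : Finset V} {C : Clause D} (hC : C.vars ⊆ W)
    (C' : Clause D) :
    clashCount C C' = ∑ v ∈ W,
      ((D v).offDiag.filter fun p => (v, p.1) ∈ C.1 ∧ (v, p.2) ∈ C'.1).card := by
  rw [← Finset.card_sigma, clashCount]
  symm
  refine Finset.card_nbij Sigma.fst ?maps_to ?injective ?surjective
  case maps_to =>
    rintro ⟨v, ε, ε'⟩ hp
    simp only [Finset.mem_coe, Finset.mem_sigma, Finset.mem_filter, Finset.mem_offDiag] at hp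
    obtain ⟨-, ⟨-, -, hne⟩, hε, hε'⟩ := hp
    exact Finset.mem_filter.mpr ⟨Finset.mem_image_of_mem Prod.fst hε, ε, ε', hε, hε', hne⟩
  case injective =>
    rintro ⟨v, ε₁, ε₁'⟩ hp ⟨_, ε₂, ε₂'⟩ hq rfl
    simp only [Finset.mem_coe, Finset.mem_sigma, Finset.mem_filter] at hp hq
    rw [FinFn.snd_eq_of_mem hp.2.2.1 hq.2.2.1, FinFn.snd_eq_of_mem hp.2.2.2 hq.2.2.2]
  case surjective =>
    intro v hv
    obtain ⟨hvC, ε, ε', hε, hε', hne⟩ := Finset.mem_filter.mp hv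
    refine ⟨⟨v, ε, ε'⟩, ?_, rfl⟩
    simp only [Finset.mem_coe, Finset.mem_sigma, Finset.mem_filter, Finset.mem_offDiag]
    exact ⟨hC hvC, ⟨C.2.1 _ hε, C'.2.1 _ hε', hne⟩, hε, hε'⟩

variable {ι : Type*}

/-- The conflict matrix of a family of clauses. Its diagonal is written like every other entry:
it vanishes because no clause clashes with itself. -/
noncomputable def conflictMatrix (c : ι → Clause D) : Matrix ι ι ℝ :=
  Matrix.of fun i j => (clashCount (c i) (c j) : ℝ)

/-- The 0/1-vector marking the members of a family of clauses that contain the literal `l`. -/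
noncomputable def occurrenceVec (c : ι → Clause D) (l : V × α) : ι → ℝ :=
  fun i => if l ∈ (c i).1 then 1 else 0

variable {W : Finset V} {c : ι → Clause D}

lemma conflictMatrix_eq_sum_vecMulVec (hc : ∀ i, (c i).vars ⊆ W) :
    conflictMatrix c = ∑ v ∈ W, ∑ p ∈ (D v).offDiag,
      Matrix.vecMulVec (occurrenceVec c (v, p.1)) (occurrenceVec c (v, p.2)) := by
  ext i j
  simp only [conflictMatrix, Matrix.of_apply, clashCount_eq_sum_card_offDiag (hc i),
    Finset.natCast_card_filter, Nat.cast_sum, Matrix.sum_apply, Matrix.vecMulVec_apply,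
    occurrenceVec, ite_and, ite_mul, one_mul, zero_mul]

variable [Fintype ι]

lemma dotProduct_conflictMatrix_mulVec (hc : ∀ i, (c i).vars ⊆ W) (x : ι → ℝ) :
    x ⬝ᵥ conflictMatrix c *ᵥ x = ∑ v ∈ W, ∑ p ∈ (D v).offDiag,
      (occurrenceVec c (v, p.1) ⬝ᵥ x) * (occurrenceVec c (v, p.2) ⬝ᵥ x) := by
  simp only [conflictMatrix_eq_sum_vecMulVec hc, Matrix.sum_mulVec, Matrix.vecMulVec_mulVec,
    op_smul_eq_smul, dotProduct_comm x, sum_dotProduct, smul_dotProduct, smul_eq_mul, mul_comm]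

lemma dotProduct_conflictMatrix_mulVec_eq_zero (hc : ∀ i, (c i).vars ⊆ W) (ε₀ : V → α)
    {x : ι → ℝ}
    (hx : ∀ v ∈ W, ∀ ε ∈ (D v).erase (ε₀ v), occurrenceVec c (v, ε) ⬝ᵥ x = 0) :
    x ⬝ᵥ conflictMatrix c *ᵥ x = 0 := by
  rw [dotProduct_conflictMatrix_mulVec hc]
  refine Finset.sum_eq_zero fun v hv => Finset.sum_eq_zero fun ⟨ε, ε'⟩ hp => ?_
  obtain ⟨hε, hε', hne⟩ := Finset.mem_offDiag.mp hp
  by_cases h : ε = ε₀ v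
  · have hε'₀ : ε' ≠ ε₀ v := fun h' => hne (h.trans h'.symm)
    rw [hx v hv ε' (Finset.mem_erase.mpr ⟨hε'₀, hε'⟩), mul_zero]
  · rw [hx v hv ε (Finset.mem_erase.mpr ⟨h, hε⟩), zero_mul]

omit [DecidableEq α] in
lemma hermitianRank_conflictMatrix_le [DecidableEq ι] (hc : ∀ i, (c i).vars ⊆ W) {ε₀ : V → α}
    (hε₀ : ∀ v ∈ W, ε₀ v ∈ D v) (hM : (conflictMatrix c).IsHermitian) :
    (hermitianRank hM : ℤ) ≤ ∑ v ∈ W, ((D v).card - 1 : ℤ) := by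
  let I : Finset (Σ _ : V, α) := W.sigma fun v => (D v).erase (ε₀ v)
  let T := (Matrix.of fun l : I => occurrenceVec c (l.1.1, l.1.2)).mulVecLin
  have isotropic : ∀ x, T x = 0 → x ⬝ᵥ conflictMatrix c *ᵥ x = 0 := fun x hx =>
    dotProduct_conflictMatrix_mulVec_eq_zero hc ε₀ fun v hv ε hε =>
      congrFun hx ⟨⟨v, ε⟩, Finset.mem_sigma.mpr ⟨hv, hε⟩⟩
  calc (hermitianRank hM : ℤ)
      ≤ I.card := by
        simpa using hermitianRank_le_finrank_of_isotropic_ker hM T isotropic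
    _ = ∑ v ∈ W, ((D v).card - 1 : ℤ) := by
        rw [Finset.card_sigma, Nat.cast_sum]
        exact Finset.sum_congr rfl fun v hv => Finset.cast_card_erase_of_mem (hε₀ v hv)

end ConflictMatrix

lemma vars_subset_mvars {F : Multiset (Clause D)} {C : Clause D} (hC : C ∈ F) :
    C.vars ⊆ mvars F :=
  Finset.le_sup (f := FinFn.vars) (Multiset.mem_toFinset.mpr hC)

/-- generalised Graham–Pollak bound: `δ(F) ≤ hdef(F)`, where the
hermitian defect is `c(F)` minus the maximum of the numbers of positive and of
negative eigenvalues of the conflict matrix of `F` (with respect to any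
enumeration `L` of the clause-occurrences). -/
theorem deficiency_le_hermitian_defect
    (hD : ∀ v, (D v).Nonempty) (F : Multiset (Clause D))
    (L : List (Clause D)) (hL : (↑L : Multiset (Clause D)) = F)
    (M : Matrix (Fin L.length) (Fin L.length) ℝ)
    (hM : ∀ i j, M i j =
      if i = j then 0 else (clashCount (L.get i) (L.get j) : ℝ))
    (herm : M.IsHermitian) :
    delta F ≤ (L.length : ℤ) -
      max ((Finset.univ.filter (fun i => 0 < herm.eigenvalues i)).card : ℤ)
          ((Finset.univ.filter (fun i => herm.eigenvalues i < 0)).card : ℤ) := by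
  subst hL
  obtain rfl : M = conflictMatrix L.get := by
    ext i j
    rcases eq_or_ne i j with rfl | hij
    · simp [hM, conflictMatrix, clashCount_self]
    · simp [hM, conflictMatrix, hij]
  choose ε₀ hε₀ using hD
  have vars_subset : ∀ i, (L.get i).vars ⊆ mvars (L : Multiset (Clause D)) := fun i =>
    vars_subset_mvars (Multiset.mem_coe.mpr (L.get_mem i))
  have rank_bound := hermitianRank_conflictMatrix_le vars_subset (fun v _ => hε₀ v) herm
  rw [← Nat.cast_max, delta, Multiset.coe_card]
  exact sub_le_sub_left rank_bound _

end GCLS
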